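/- arXiv:2208.14596 — 3 statements merged into one kernel-verified Lean document; each statement's English description precedes it below -/
import Mathlib

section
/- Let d ≥ 1, let ρ be a d×d complex matrix, let k ≥ 1, and let G be a subgroup of the permutation group of Fin k. Then (1/|G|) ∑_{π ∈ G} tr(W(π) * ρ^{⊗k}) = (1/|G|) ∑_{π ∈ G} ∏_{j=1}^{k} (tr(ρ^j))^{c_j(π)}; that is, the acceptance probability of the G-Bose symmetry test on ρ^{⊗k} equals the cycle index polynomial of G evaluated at x_j = tr(ρ^j) for j = 1,…,k. -/
/-!
Expanding the trace gives `tr (W(π) ρ^{⊗ι}) = ∑ y, ∏ i, ρ (y i) (y (π i))`. The product over `i`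
splits along the cycles of `π`, and the sum over colourings `y` distributes over them, so the
trace is the product over the cycles of the same expression for a single cycle
(`sum_prod_eq_prod_cycles`). For one cycle of length `n` that expression is the sum over closed
walks of length `n`, which is `tr (ρ ^ n)` (`sum_closed_walks`). Grouping the cycles by their
length produces the exponents `cycleCount π j`; this uses that the points lying on cycles of
length `j` number `j` times the cycles of length `j` (`cycleCount_eq_card`).
-/

open Matrix

/-- The `ι`-fold tensor power of a matrix `ρ`, with entries `∏ i, ρ (x i) (y i)`. -/
noncomputable def tensorPow {d : ℕ} (ρ : Matrix (Fin d) (Fin d) ℂ) (ι : Type) [Fintype ι] :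
    Matrix (ι → Fin d) (ι → Fin d) ℂ :=
  Matrix.of fun x y => ∏ i, ρ (x i) (y i)

/-- The permutation operator `W(π)` acting on the tensor factors. -/
def permOp (d : ℕ) {ι : Type} [Fintype ι] [DecidableEq ι] (π : Equiv.Perm ι) :
    Matrix (ι → Fin d) (ι → Fin d) ℂ :=
  Matrix.of fun x y => if x = y ∘ π then 1 else 0

/-- `cycleCount π j` is the number of cycles of length `j` in the disjoint cycle
decomposition of `π`, counting fixed points as 1-cycles. -/
def cycleCount {α : Type*} [Fintype α] [DecidableEq α] (π : Equiv.Perm α) (j : ℕ) : ℕ :=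
  (Finset.univ.filter fun x : α =>
    (Finset.univ.filter fun y : α => π.SameCycle x y).card = j).card / j

/-- Sum over walks with `m` steps, weighted by an arbitrary function `f` of the endpoints. -/
lemma sum_walks {D : Type*} [Fintype D] [DecidableEq D] (ρ : Matrix D D ℂ) (m : ℕ) :
    ∀ f : D → D → ℂ,
      ∑ y : Fin (m + 1) → D,
        (∏ i : Fin m, ρ (y i.castSucc) (y i.succ)) * f (y 0) (y (Fin.last m))
      = ∑ a, ∑ b, (ρ ^ m) a b * f a b := by
  induction m with
  | zero =>
    intro f
    rw [← (Equiv.funUnique (Fin 1) D).symm.sum_comp]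
    simp [Matrix.one_apply]
  | succ m ih =>
    intro f
    -- Split off the last vertex of the walk and absorb the last step into the endpoint weight.
    have h := ih fun a c => ∑ b, ρ c b * f a b
    rw [← (Fin.snocEquiv fun _ : Fin (m + 2) => D).sum_comp, Fintype.sum_prod_type_right]
    have h1 : ∀ (y : Fin (m + 1) → D),
        ∑ b, (∏ i : Fin (m + 1), ρ ((Fin.snocEquiv fun _ : Fin (m + 2) => D) (b, y) i.castSucc)
            ((Fin.snocEquiv fun _ : Fin (m + 2) => D) (b, y) i.succ)) *
          f ((Fin.snocEquiv fun _ : Fin (m + 2) => D) (b, y) 0)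
            ((Fin.snocEquiv fun _ : Fin (m + 2) => D) (b, y) (Fin.last (m + 1)))
        = (∏ i : Fin m, ρ (y i.castSucc) (y i.succ)) *
            ∑ b, ρ (y (Fin.last m)) b * f (y 0) b := by
      intro y
      rw [Finset.mul_sum]
      refine Finset.sum_congr rfl fun b _ => ?_
      have h0 : (Fin.snoc (α := fun _ => D) y b : Fin (m + 2) → D) 0 = y 0 :=
        Fin.snoc_castSucc (α := fun _ => D) b y 0
      rw [Fin.prod_univ_castSucc]
      simp only [Fin.snocEquiv_apply, Fin.succ_last, Fin.snoc_castSucc, Fin.snoc_last, h0,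
        Fin.succ_castSucc]
      ring
    rw [Finset.sum_congr rfl fun y _ => h1 y, h]
    refine Finset.sum_congr rfl fun a _ => ?_
    simp only [pow_succ, Matrix.mul_apply, Finset.mul_sum, Finset.sum_mul]
    rw [Finset.sum_comm]
    simp only [mul_assoc]

/-- The sum over closed walks of length `n` is `tr (ρ ^ n)`. The vertices of the walk are indexed
by a type `β` on which `τ` acts as the successor map of `ZMod n`. -/
lemma sum_closed_walks {D β : Type*} [Fintype D] [DecidableEq D] [Fintype β] [DecidableEq β]
    (ρ : Matrix D D ℂ) (n : ℕ) (hn : n ≠ 0) (e : β ≃ ZMod n) (τ : β → β)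
    (hτ : ∀ b, e (τ b) = e b + 1) :
    ∑ y : β → D, ∏ i, ρ (y i) (y (τ i)) = (ρ ^ n).trace := by
  obtain ⟨m, rfl⟩ := Nat.exists_eq_succ_of_ne_zero hn
  change β ≃ Fin (m + 1) at e
  change ∀ b, e (τ b) = e b + (1 : Fin (m + 1)) at hτ
  have h := sum_walks ρ m fun a b => ρ b a
  rw [← (Equiv.arrowCongr e.symm (Equiv.refl D)).sum_comp]
  have h1 : ∀ y : Fin (m + 1) → D,
      ∏ i, ρ ((Equiv.arrowCongr e.symm (Equiv.refl D)) y i)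
        ((Equiv.arrowCongr e.symm (Equiv.refl D)) y (τ i))
      = (∏ i : Fin m, ρ (y i.castSucc) (y i.succ)) * ρ (y (Fin.last m)) (y 0) := by
    intro y
    simp only [Equiv.arrowCongr_apply, Equiv.symm_symm, Function.comp_apply, Equiv.refl_apply, hτ]
    rw [e.prod_comp fun i => ρ (y i) (y (i + 1)), Fin.prod_univ_castSucc]
    simp [Fin.last_add_one]
  rw [Finset.sum_congr rfl fun y _ => h1 y, h]
  simp [Matrix.trace, pow_succ, Matrix.mul_apply]

/-- A colouring sum for a map `π` preserving the fibres of `f : α → Q` factors over the fibres. -/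
lemma sum_prod_eq_prod_fibers {D α Q : Type*} [Fintype D] [DecidableEq D] [Fintype α]
    [DecidableEq α] [Fintype Q] [DecidableEq Q] (ρ : Matrix D D ℂ) (π : α → α) (f : α → Q)
    (hf : ∀ x, f (π x) = f x) :
    ∑ y : α → D, ∏ i, ρ (y i) (y (π i))
      = ∏ q : Q, ∑ y : {x // f x = q} → D,
          ∏ i : {x // f x = q}, ρ (y i) (y ⟨π i, (hf i).trans i.2⟩) := by
  rw [Fintype.prod_sum]
  let E : (α → D) ≃ ((q : Q) → {x // f x = q} → D) :=
    { toFun := fun y _ i => y i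
      invFun := fun z x => z (f x) ⟨x, rfl⟩
      left_inv := fun _ => rfl
      right_inv := fun z => by
        funext q ⟨x, hx⟩
        subst hx
        rfl }
  rw [← E.sum_comp]
  refine Finset.sum_congr rfl fun y _ => ?_
  rw [← (Equiv.sigmaFiberEquiv f).prod_comp, Fintype.prod_sigma]
  rfl

/-- The colouring sum of a permutation is the product over its cycles of `tr (ρ ^ length)`. The
cycles are the points of `Q`, presented through a surjection `f` with the cycles as fibres. -/
lemma sum_prod_eq_prod_cycles {D α Q : Type*} [Fintype D] [DecidableEq D] [Fintype α]
    [DecidableEq α] [Fintype Q] [DecidableEq Q] (ρ : Matrix D D ℂ) (π : Equiv.Perm α) (f : α → Q)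
    (hs : Function.Surjective f) (hf : ∀ x y, f x = f y ↔ π.SameCycle x y) :
    ∑ y : α → D, ∏ i, ρ (y i) (y (π i))
      = ∏ q : Q, (ρ ^ Fintype.card {x // f x = q}).trace := by
  have hπ : ∀ x, f (π x) = f x := fun x => by
    rw [hf, Equiv.Perm.sameCycle_apply_left]
  rw [sum_prod_eq_prod_fibers ρ π f hπ]
  refine Finset.prod_congr rfl fun q _ => ?_
  obtain ⟨x, rfl⟩ := hs q
  have hmem : ∀ z, f z = f x ↔ z ∈ MulAction.orbit (Subgroup.zpowers π) x := by
    intro z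
    rw [eq_comm, hf, MulAction.mem_orbit_iff]
    constructor
    · rintro ⟨i, hi⟩
      exact ⟨⟨π ^ i, i, rfl⟩, hi⟩
    · rintro ⟨⟨_, i, rfl⟩, hi⟩
      exact ⟨i, hi⟩
  let e : {z // f z = f x} ≃ ZMod (Function.minimalPeriod (π • ·) x) :=
    (Equiv.subtypeEquivRight hmem).trans (MulAction.orbitZPowersEquiv π x)
  have hn : Function.minimalPeriod (π • ·) x ≠ 0 := by
    intro h0
    rw [h0] at e
    exact not_finite_iff_infinite.2 (inferInstance : Infinite ℤ) (Finite.of_equiv _ e)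
  have : NeZero (Function.minimalPeriod (π • ·) x) := ⟨hn⟩
  have hcard : Fintype.card {z // f z = f x} = Function.minimalPeriod (π • ·) x := by
    rw [Fintype.card_congr e, ZMod.card]
  rw [hcard]
  refine sum_closed_walks ρ _ hn e _ fun b => ?_
  -- Both sides are compared after `e.symm`, which sends the class of `i` to `π ^ i • x`.
  have hsymm : ∀ i : ℤ, ((e.symm i : {z // f z = f x}) : α) = (π ^ i) x := by
    intro i
    change ((MulAction.orbitZPowersEquiv π x).symm (i : ZMod _) : α) = _
    rw [MulAction.orbitZPowersEquiv_symm_apply']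
    rfl
  obtain ⟨i, hi⟩ := ZMod.intCast_surjective (e b)
  have hb : b = e.symm i := by rw [hi, Equiv.symm_apply_apply]
  rw [← Equiv.eq_symm_apply, ← hi]
  have hcast : ((i : ZMod (Function.minimalPeriod (π • ·) x)) + 1) = ((i + 1 : ℤ) : ZMod _) := by
    push_cast; rfl
  rw [hcast]
  apply Subtype.ext
  rw [hsymm]
  change π b = _
  rw [hb, hsymm, add_comm, _root_.zpow_add, zpow_one]
  rfl

/-- `cycleCount π j` counts the points of `Q` whose fibre has size `j`, where the nonempty fibres
of `f` are the cycles of `π`. Empty fibres are excluded by `0 < j`. -/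
lemma cycleCount_eq_card {α Q : Type*} [Fintype α] [DecidableEq α] [Fintype Q] [DecidableEq Q]
    (π : Equiv.Perm α) (f : α → Q) (hf : ∀ x y, f x = f y ↔ π.SameCycle x y)
    (j : ℕ) (hj : 0 < j) :
    cycleCount π j = (Finset.univ.filter fun q : Q => Fintype.card {x // f x = q} = j).card := by
  have hc : ∀ x, (Finset.univ.filter fun y : α => π.SameCycle x y).card
      = Fintype.card {z // f z = f x} := by
    intro x
    rw [Fintype.card_subtype]
    congr 1
    ext y
    simp only [Finset.mem_filter, Finset.mem_univ, true_and]
    rw [← hf, eq_comm]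
  unfold cycleCount
  simp only [hc]
  refine Nat.div_eq_of_eq_mul_left hj ?_
  rw [Finset.card_eq_sum_card_fiberwise (f := f)
    (t := Finset.univ.filter fun q : Q => Fintype.card {x // f x = q} = j)
    (fun x hx => by simpa using hx)]
  refine Finset.sum_const_nat fun q hq => ?_
  have hq' := (Finset.mem_filter.1 hq).2
  refine Eq.trans ?_ hq'
  rw [Fintype.card_subtype, Finset.filter_filter]
  congr 1
  ext x
  simp only [Finset.mem_filter, Finset.mem_univ, true_and]
  refine ⟨fun h => h.2, fun h => ⟨?_, h⟩⟩
  rw [h, hq']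

lemma trace_permOp_mul_tensorPow {d : ℕ} {ι : Type} [Fintype ι] [DecidableEq ι]
    (ρ : Matrix (Fin d) (Fin d) ℂ) (π : Equiv.Perm ι) :
    (permOp d π * tensorPow ρ ι).trace = ∑ y : ι → Fin d, ∏ i, ρ (y i) (y (π i)) := by
  simp only [Matrix.trace, Matrix.diag_apply, Matrix.mul_apply, permOp, tensorPow, Matrix.of_apply]
  rw [Finset.sum_comm]
  simp

theorem acceptance_prob_eq_cycle_index (d k : ℕ) (hd : 1 ≤ d) (hk : 1 ≤ k)
    (ρ : Matrix (Fin d) (Fin d) ℂ) (G : Subgroup (Equiv.Perm (Fin k))) [Fintype G] :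
    (1 / (Fintype.card G : ℂ)) *
        ∑ π : G, (permOp d (π : Equiv.Perm (Fin k)) * tensorPow ρ (Fin k)).trace
      = (1 / (Fintype.card G : ℂ)) *
        ∑ π : G, ∏ j ∈ Finset.Icc 1 k,
          ((ρ ^ j).trace) ^ cycleCount (π : Equiv.Perm (Fin k)) j := by
  classical
  congr 1
  refine Finset.sum_congr rfl fun π _ => ?_
  let S := Equiv.Perm.SameCycle.setoid (π : Equiv.Perm (Fin k))
  let f : Fin k → Quotient S := Quotient.mk S
  have hs : Function.Surjective f := Quotient.mk_surjective
  have hf : ∀ x y, f x = f y ↔ (π : Equiv.Perm (Fin k)).SameCycle x y := fun x y => Quotient.eq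
  rw [trace_permOp_mul_tensorPow, sum_prod_eq_prod_cycles ρ _ f hs hf]
  have hmaps : ∀ q ∈ (Finset.univ : Finset (Quotient S)),
      Fintype.card {x // f x = q} ∈ Finset.Icc 1 k := by
    intro q _
    obtain ⟨x, hx⟩ := hs q
    rw [Finset.mem_Icc]
    refine ⟨Fintype.card_pos_iff.2 ⟨⟨x, hx⟩⟩, ?_⟩
    simpa using Fintype.card_subtype_le fun x => f x = q
  rw [← Finset.prod_fiberwise_of_maps_to hmaps]
  refine Finset.prod_congr rfl fun j hj => ?_
  rw [cycleCount_eq_card _ f hf j (Finset.mem_Icc.1 hj).1]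
  refine Finset.prod_eq_pow_card fun q hq => ?_
  rw [(Finset.mem_filter.1 hq).2]
end

section
/- Let r ≥ 1 and let λ : Fin r → ℝ satisfy 0 ≤ λ_i < 1 for all i and ∑_i λ_i = 1. Define p_j = ∑_i λ_i^j and Z_n = (1/n!) ∑_{π ∈ S_n} ∏_{j=1}^{n} p_j^{c_j(π)}. Then Z_k tends to 0 as k → ∞. -/
open Equiv Finset

/-- The type of cycles of `π` (fixed points included), as classes of the same-cycle relation. -/
abbrev CycleClass {α : Type*} (π : Perm α) : Type _ :=
  Quotient (Perm.SameCycle.setoid π)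

open Classical in
/-- The length of a cycle, as the size of the corresponding class. -/
noncomputable def classSize {α : Type*} [Fintype α] (π : Perm α) (q : CycleClass π) : ℕ :=
  (univ.filter fun y : α => (Quotient.mk _ y : CycleClass π) = q).card

open Classical in
lemma classSize_mk {α : Type*} [Fintype α] [DecidableEq α] (π : Perm α) (x : α) :
    classSize π (Quotient.mk _ x) = (univ.filter fun y : α => π.SameCycle x y).card := by
  unfold classSize
  congr 1
  ext y
  simp only [mem_filter, mem_univ, true_and]
  rw [Quotient.eq]
  exact Perm.sameCycle_comm

lemma classSize_mem_Icc {α : Type*} [Fintype α] (π : Perm α) (q : CycleClass π) :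
    classSize π q ∈ Icc 1 (Fintype.card α) := by
  classical
  rw [mem_Icc]
  refine ⟨?_, card_le_univ _⟩
  induction q using Quotient.inductionOn with
  | h x => exact card_pos.mpr ⟨x, by simp⟩

open Classical in
/-- The points lying on cycles of length `j` split into classes of size `j`, so the division in
`cycleCount` is exact. -/
lemma cycleCount_eq {α : Type*} [Fintype α] [DecidableEq α] (π : Perm α) {j : ℕ} (hj : 1 ≤ j) :
    cycleCount π j = (univ.filter fun q : CycleClass π => classSize π q = j).card := by
  unfold cycleCount
  apply Nat.div_eq_of_eq_mul_left hj
  rw [card_eq_sum_card_fiberwise (f := fun x => (Quotient.mk _ x : CycleClass π))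
    (t := univ.filter fun q : CycleClass π => classSize π q = j)]
  · rw [← smul_eq_mul, ← sum_const]
    refine sum_congr rfl fun q hq => ?_
    have hq' : classSize π q = j := (mem_filter.mp hq).2
    conv_rhs => rw [← hq']
    unfold classSize
    congr 1
    ext x
    simp only [mem_filter, mem_univ, true_and, and_iff_right_iff_imp]
    intro hx
    rw [← hq', ← hx, classSize_mk]
  · intro x hx
    have hx' := (mem_filter.mp (mem_coe.mp hx)).2
    simp only [coe_filter, mem_univ, true_and, Set.mem_ofPred_eq]
    rw [classSize_mk, ← hx']

open Classical in
/-- A product over cycle lengths, weighted by the cycle counts, is a product over the cycles. -/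
lemma prod_cycleCount {n : ℕ} (π : Perm (Fin n)) (g : ℕ → ℝ) :
    ∏ j ∈ Icc 1 n, g j ^ cycleCount π j = ∏ q : CycleClass π, g (classSize π q) := by
  rw [← prod_fiberwise_of_maps_to (s := univ) (t := Icc 1 n) (g := classSize π)]
  · refine prod_congr rfl fun j hj => ?_
    rw [cycleCount_eq π (mem_Icc.mp hj).1, ← prod_const]
    exact prod_congr rfl fun q hq => by rw [(mem_filter.mp hq).2]
  · intro q _
    simpa using classSize_mem_Icc π q

open Classical in
lemma sum_classSize {n : ℕ} (π : Perm (Fin n)) : ∑ q : CycleClass π, classSize π q = n := by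
  have h := card_eq_sum_card_fiberwise (s := (univ : Finset (Fin n)))
    (f := fun x => (Quotient.mk _ x : CycleClass π)) (t := univ) (fun _ _ => by simp)
  rw [card_univ, Fintype.card_fin] at h
  exact h.symm

attribute [local instance] arrowAction

open Classical in
/-- A colouring of the set of cycles pulls back to a colouring fixed by `π`. -/
lemma pow_card_le_card_fixedBy {n r : ℕ} (π : Perm (Fin n)) :
    r ^ Fintype.card (CycleClass π) ≤
      Fintype.card (MulAction.fixedBy (Fin n → Fin r) π) := by
  rw [← Fintype.card_fin r, ← Fintype.card_fun, Fintype.card_fin]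
  refine Fintype.card_le_of_injective
    (fun g => ⟨fun x => g (Quotient.mk _ x), ?_⟩) ?_
  · rw [MulAction.mem_fixedBy]
    funext x
    change g (Quotient.mk _ (π⁻¹ x)) = g (Quotient.mk _ x)
    congr 1
    refine Quotient.sound ?_
    exact ⟨1, by simp⟩
  · intro g g' h
    funext q
    induction q using Quotient.inductionOn with
    | h x => exact congrFun (congrArg Subtype.val h) x

open Classical in
/-- Colourings using each colour equally often lie in one orbit, so the orbits inject into the
vectors of colour multiplicities. -/
lemma card_orbits_le (n r : ℕ) :
    Fintype.card (Quotient (MulAction.orbitRel (Perm (Fin n)) (Fin n → Fin r))) ≤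
      (n + 1) ^ r := by
  have key : Fintype.card (Fin r → Fin (n + 1)) = (n + 1) ^ r := by simp
  rw [← key]
  refine Fintype.card_le_of_injective
    (fun q c => ⟨Fintype.card {x // q.out x = c}, ?_⟩) ?_
  · rw [Nat.lt_succ_iff]
    simpa using Fintype.card_subtype_le fun x => q.out x = c
  · intro q q' h
    rw [← Quotient.out_equiv_out]
    have hc : ∀ c, Fintype.card {x // q.out x = c} = Fintype.card {x // q'.out x = c} :=
      fun c => congrArg Fin.val (congrFun h c)
    let e := fun c => Fintype.equivOfCardEq (hc c)
    refine ⟨(Equiv.ofFiberEquiv e)⁻¹, ?_⟩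
    funext x
    exact Equiv.ofFiberEquiv_map e x

open Classical in
lemma sum_pow_card_le (n r : ℕ) :
    ∑ π : Perm (Fin n), r ^ Fintype.card (CycleClass π) ≤ (n + 1) ^ r * n.factorial := by
  have hB := MulAction.sum_card_fixedBy_eq_card_orbits_mul_card_group
    (Perm (Fin n)) (Fin n → Fin r)
  rw [Fintype.card_perm, Fintype.card_fin] at hB
  calc _ ≤ ∑ π : Perm (Fin n), Fintype.card (MulAction.fixedBy (Fin n → Fin r) π) :=
        sum_le_sum fun π _ => pow_card_le_card_fixedBy π
    _ = _ := hB
    _ ≤ _ := Nat.mul_le_mul_right _ (card_orbits_le n r)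

theorem acceptance_prob_tendsto_zero (r : ℕ) (hr : 1 ≤ r) (lam : Fin r → ℝ)
    (h0 : ∀ i, 0 ≤ lam i) (h1 : ∀ i, lam i < 1) (hsum : ∑ i, lam i = 1)
    (p : ℕ → ℝ) (hp : ∀ j, p j = ∑ i, lam i ^ j)
    (Z : ℕ → ℝ)
    (hZ : ∀ n, Z n = (1 / (Nat.factorial n : ℝ)) *
      ∑ π : Equiv.Perm (Fin n), ∏ j ∈ Finset.Icc 1 n, p j ^ cycleCount π j) :
    Filter.Tendsto Z Filter.atTop (nhds 0) := by
  classical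
  have : Nonempty (Fin r) := ⟨⟨0, hr⟩⟩
  obtain ⟨M, hM0, hM1, hM⟩ : ∃ M : ℝ, 0 < M ∧ M < 1 ∧ ∀ i, lam i ≤ M := by
    obtain ⟨i, hi⟩ := Finite.exists_max lam
    -- the maximum with `1 / 2` makes positivity of the bound immediate
    exact ⟨max (lam i) (1 / 2), by positivity, max_lt (h1 i) (by norm_num),
      fun k => (hi k).trans (le_max_left _ _)⟩
  have hp0 : ∀ j, 0 ≤ p j := fun j => by
    rw [hp]
    exact sum_nonneg fun i _ => pow_nonneg (h0 i) j
  have hpM : ∀ j, p j ≤ r * M ^ j := fun j => by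
    rw [hp]
    calc _ ≤ ∑ _i : Fin r, M ^ j := sum_le_sum fun i _ => pow_le_pow_left₀ (h0 i) (hM i) j
      _ = _ := by simp
  have hterm : ∀ n (π : Perm (Fin n)), ∏ j ∈ Icc 1 n, p j ^ cycleCount π j ≤
      (r : ℝ) ^ Fintype.card (CycleClass π) * M ^ n := fun n π => by
    rw [prod_cycleCount]
    calc _ ≤ ∏ q : CycleClass π, ((r : ℝ) * M ^ classSize π q) :=
          prod_le_prod (fun q _ => hp0 _) fun q _ => hpM _
      _ = _ := by
        rw [prod_mul_distrib, prod_const, card_univ, prod_pow_eq_pow_sum, sum_classSize]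
  have hupper : ∀ n, Z n ≤ ((n + 1 : ℕ) : ℝ) ^ r * M ^ (n + 1) / M := fun n => by
    have hf : (0 : ℝ) < n.factorial := by exact_mod_cast n.factorial_pos
    have hs : ∑ π : Perm (Fin n), (r : ℝ) ^ Fintype.card (CycleClass π) ≤
        ((n + 1 : ℕ) : ℝ) ^ r * n.factorial := by exact_mod_cast sum_pow_card_le n r
    have h2 : ∑ π : Perm (Fin n), ∏ j ∈ Icc 1 n, p j ^ cycleCount π j ≤
        ((n + 1 : ℕ) : ℝ) ^ r * n.factorial * M ^ n := by
      refine (sum_le_sum fun π _ => hterm n π).trans ?_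
      rw [← sum_mul]
      exact mul_le_mul_of_nonneg_right hs (by positivity)
    rw [hZ, one_div, inv_mul_le_iff₀ hf]
    refine h2.trans_eq ?_
    rw [pow_succ]
    field_simp
  have hlower : ∀ n, 0 ≤ Z n := fun n => by
    rw [hZ]
    exact mul_nonneg (by positivity)
      (sum_nonneg fun π _ => prod_nonneg fun j _ => pow_nonneg (hp0 j) _)
  have hlim : Filter.Tendsto (fun n : ℕ => ((n + 1 : ℕ) : ℝ) ^ r * M ^ (n + 1) / M)
      Filter.atTop (nhds 0) := by
    have h := (tendsto_pow_const_mul_const_pow_of_lt_one r hM0.le hM1).comp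
      (Filter.tendsto_add_atTop_nat 1)
    simpa using h.div_const M
  exact squeeze_zero hlower hupper hlim
end

section
/- Let r ≥ 1 and let λ : Fin r → ℝ satisfy 0 ≤ λ_i for all i and ∑_i λ_i = 1. Define p_j = ∑_i λ_i^j and Z_n = (1/n!) ∑_{π ∈ S_n} ∏_{j=1}^{n} p_j^{c_j(π)}. Then for every k ≥ 1, Z_k ≤ (1/k) ∑_{j=1}^{k} p_j. -/
/-- The length of the cycle of `π` through `x`. -/
def cycleLen {α : Type*} [Fintype α] [DecidableEq α] (π : Equiv.Perm α) (x : α) : ℕ :=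
  (Finset.univ.filter fun y : α => π.SameCycle x y).card

lemma cycleLen_conj {α β : Type*} [Fintype α] [DecidableEq α] [Fintype β] [DecidableEq β]
    (e : α ≃ β) (π : Equiv.Perm α) (x : α) :
    cycleLen (e.permCongr π) (e x) = cycleLen π x := by
  unfold cycleLen
  symm
  refine Finset.card_bij (fun y _ => e y) ?_ (fun _ _ _ _ h => e.injective h) ?_
  · intro y hy
    simp only [Finset.mem_filter, Finset.mem_univ, true_and] at hy ⊢
    obtain ⟨n, rfl⟩ := hy
    refine ⟨n, ?_⟩
    have : (e.permCongr π) ^ n = e.permCongr (π ^ n) := (map_zpow e.permCongrHom π n).symm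
    simp [this]
  · intro y hy
    simp only [Finset.mem_filter, Finset.mem_univ, true_and] at hy
    obtain ⟨n, hn⟩ := hy
    have : (e.permCongr π) ^ n = e.permCongr (π ^ n) := (map_zpow e.permCongrHom π n).symm
    refine ⟨(π ^ n) x, ?_, ?_⟩
    · exact Finset.mem_filter.2 ⟨Finset.mem_univ _, n, rfl⟩
    · rw [← hn, this]; simp

lemma cycleLen_decompose_none {n : ℕ} (σ : Equiv.Perm (Fin n)) :
    cycleLen (Equiv.Perm.decomposeOption.symm (none, σ)) none = 1 := by
  unfold cycleLen
  rw [Finset.card_eq_one]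
  refine ⟨none, ?_⟩
  ext y
  have hfix : Function.IsFixedPt (Equiv.Perm.decomposeOption.symm (none, σ)) none := by
    simp [Function.IsFixedPt]
  simp only [Finset.mem_filter, Finset.mem_univ, true_and, Finset.mem_singleton]
  constructor
  · intro h
    exact (h.eq_of_left hfix).symm
  · rintro rfl
    exact Equiv.Perm.SameCycle.refl _ _

/-- Multiplying by `swap none (some a)` inserts `none` into the cycle of `σ` through `a`. -/
lemma sameCycle_decompose_some {n : ℕ} (σ : Equiv.Perm (Fin n)) (a y : Fin n) :
    (Equiv.Perm.decomposeOption.symm (some a, σ)).SameCycle none (some y) ↔ σ.SameCycle a y := by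
  set π := Equiv.Perm.decomposeOption.symm (some a, σ) with hπ
  have hnone : π none = some a := by simp [hπ]
  have hsome : ∀ z, π (some z) = if σ z = a then none else some (σ z) := by
    intro z
    split_ifs with h
    · simp [hπ, h]
    · simp only [hπ, Equiv.Perm.decomposeOption_symm_apply, Equiv.Perm.mul_apply,
        Equiv.optionCongr_apply, Option.map_some]
      exact Equiv.swap_apply_of_ne_of_ne (by simp) (by simpa using h)
  have hbase : π.SameCycle none (some a) := ⟨1, by simpa using hnone⟩
  constructor
  · intro h
    obtain ⟨m, hm⟩ := h.exists_nat_pow_eq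
    have key : ∀ m : ℕ, ∀ z, (π ^ m) none = some z → σ.SameCycle a z := by
      intro m
      induction m with
      | zero => intro z hz; simp at hz
      | succ m ih =>
        intro z hz
        rw [pow_succ', Equiv.Perm.mul_apply] at hz
        rcases hw : (π ^ m) none with _ | w
        · rw [hw, hnone] at hz
          obtain rfl := Option.some.inj hz
          exact Equiv.Perm.SameCycle.refl _ _
        · rw [hw, hsome] at hz
          split_ifs at hz
          obtain rfl := Option.some.inj hz
          exact Equiv.Perm.sameCycle_apply_right.2 (ih w hw)
    exact key m y hm
  · intro h
    obtain ⟨m, rfl⟩ := h.exists_nat_pow_eq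
    induction m with
    | zero => simpa using hbase
    | succ m ih =>
      have ih' := Equiv.Perm.sameCycle_apply_right.2 (ih ⟨m, by simp⟩)
      rw [pow_succ', Equiv.Perm.mul_apply]
      rw [hsome] at ih'
      split_ifs at ih' with h1
      · rw [h1]; exact hbase
      · exact ih'

lemma cycleLen_decompose_some {n : ℕ} (σ : Equiv.Perm (Fin n)) (a : Fin n) :
    cycleLen (Equiv.Perm.decomposeOption.symm (some a, σ)) none = cycleLen σ a + 1 := by
  unfold cycleLen
  rw [← Finset.card_insertNone]
  congr 1
  ext y
  cases y with
  | none => simp [Equiv.Perm.SameCycle.refl]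
  | some y =>
    simp only [Finset.mem_filter, Finset.mem_univ, true_and, Finset.some_mem_insertNone]
    exact sameCycle_decompose_some σ a y

/-- The length of the cycle through a given point `a` of `Fin (n + 1)` is uniformly distributed on
`{1, …, n + 1}`, stated by means of an arbitrary test function `g`. -/
lemma sum_cycleLen (n : ℕ) : ∀ (a : Fin (n + 1)) (g : ℕ → ℝ),
    ∑ π : Equiv.Perm (Fin (n + 1)), g (cycleLen π a) =
      (Nat.factorial n : ℝ) * ∑ j ∈ Finset.range (n + 1), g (j + 1) := by
  induction n with
  | zero =>
    intro a g
    have h : ∀ π : Equiv.Perm (Fin (0 + 1)), cycleLen π a = 1 := by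
      intro π
      unfold cycleLen
      rw [Finset.filter_true_of_mem]
      · simp
      · intro y _
        rw [show y = a by omega]
    simp [h]
  | succ n ih =>
    intro a g
    have e1 : ∑ π : Equiv.Perm (Fin (n + 1 + 1)), g (cycleLen π a) =
        ∑ π : Equiv.Perm (Option (Fin (n + 1))), g (cycleLen π none) := by
      refine Fintype.sum_equiv (finSuccEquiv' a).permCongr _ _ ?_
      intro π
      have := cycleLen_conj (finSuccEquiv' a) π a
      rw [finSuccEquiv'_at] at this
      rw [this]
    have e2 : ∑ π : Equiv.Perm (Option (Fin (n + 1))), g (cycleLen π none) =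
        ∑ q : Option (Fin (n + 1)) × Equiv.Perm (Fin (n + 1)),
          g (cycleLen (Equiv.Perm.decomposeOption.symm q) none) :=
      (Fintype.sum_equiv Equiv.Perm.decomposeOption.symm _ _ fun _ => rfl).symm
    rw [e1, e2, Fintype.sum_prod_type, Fintype.sum_option]
    simp only [cycleLen_decompose_none, cycleLen_decompose_some]
    have e3 : ∀ b : Fin (n + 1), ∑ σ : Equiv.Perm (Fin (n + 1)), g (cycleLen σ b + 1) =
        (Nat.factorial n : ℝ) * ∑ j ∈ Finset.range (n + 1), g (j + 1 + 1) :=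
      fun b => ih b fun j => g (j + 1)
    simp only [e3]
    rw [Finset.sum_range_succ' _ (n + 1)]
    simp only [Finset.sum_const, Finset.card_univ, Fintype.card_perm, Fintype.card_fin,
      nsmul_eq_mul, Nat.factorial_succ]
    push_cast
    ring

lemma prod_le_cycleLen {n : ℕ} (p : ℕ → ℝ) (hp0 : ∀ j, 1 ≤ j → 0 ≤ p j)
    (hp1 : ∀ j, 1 ≤ j → p j ≤ 1) (π : Equiv.Perm (Fin n)) (x : Fin n) :
    ∏ j ∈ Finset.Icc 1 n, p j ^ cycleCount π j ≤ p (cycleLen π x) := by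
  have hL1 : 1 ≤ cycleLen π x :=
    Finset.card_pos.2 ⟨x, by simp [Equiv.Perm.SameCycle.refl]⟩
  have hLn : cycleLen π x ≤ n := by
    simpa [cycleLen] using Finset.card_le_univ (Finset.univ.filter fun y => π.SameCycle x y)
  have hc : 1 ≤ cycleCount π (cycleLen π x) := by
    unfold cycleCount
    rw [Nat.one_le_div_iff hL1]
    refine Finset.card_le_card ?_
    intro y hy
    simp only [Finset.mem_filter, Finset.mem_univ, true_and] at hy ⊢
    unfold cycleLen
    congr 1
    ext z
    simp only [Finset.mem_filter, Finset.mem_univ, true_and]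
    exact ⟨fun h => hy.trans h, fun h => hy.symm.trans h⟩
  rw [← Finset.mul_prod_erase _ _ (Finset.mem_Icc.2 ⟨hL1, hLn⟩)]
  have hrest : ∏ j ∈ (Finset.Icc 1 n).erase (cycleLen π x), p j ^ cycleCount π j ≤ 1 := by
    refine Finset.prod_le_one ?_ ?_
    · intro j hj
      exact pow_nonneg (hp0 j (Finset.mem_Icc.1 (Finset.mem_of_mem_erase hj)).1) _
    · intro j hj
      have hj1 := (Finset.mem_Icc.1 (Finset.mem_of_mem_erase hj)).1
      exact pow_le_one₀ (hp0 j hj1) (hp1 j hj1)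
  calc _ ≤ p (cycleLen π x) ^ cycleCount π (cycleLen π x) * 1 :=
        mul_le_mul_of_nonneg_left hrest (pow_nonneg (hp0 _ hL1) _)
    _ ≤ p (cycleLen π x) := by
        rw [mul_one]
        exact pow_le_of_le_one (hp0 _ hL1) (hp1 _ hL1) (by omega)

theorem acceptance_prob_le_average_power_sum (r : ℕ) (hr : 1 ≤ r) (lam : Fin r → ℝ)
    (h0 : ∀ i, 0 ≤ lam i) (hsum : ∑ i, lam i = 1)
    (p : ℕ → ℝ) (hp : ∀ j, p j = ∑ i, lam i ^ j)
    (Z : ℕ → ℝ)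
    (hZ : ∀ n, Z n = (1 / (Nat.factorial n : ℝ)) *
      ∑ π : Equiv.Perm (Fin n), ∏ j ∈ Finset.Icc 1 n, p j ^ cycleCount π j)
    (k : ℕ) (hk : 1 ≤ k) :
    Z k ≤ (1 / (k : ℝ)) * ∑ j ∈ Finset.Icc 1 k, p j := by
  have hp0 : ∀ j, 1 ≤ j → 0 ≤ p j := by
    intro j _
    rw [hp]
    exact Finset.sum_nonneg fun i _ => pow_nonneg (h0 i) j
  have hp1 : ∀ j, 1 ≤ j → p j ≤ 1 := by
    intro j hj
    rw [hp, ← hsum]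
    refine Finset.sum_le_sum fun i _ => ?_
    have hi : lam i ≤ 1 := hsum ▸ Finset.single_le_sum (fun i _ => h0 i) (Finset.mem_univ i)
    exact pow_le_of_le_one (h0 i) hi (by omega)
  obtain ⟨n, rfl⟩ : ∃ n, k = n + 1 := ⟨k - 1, by omega⟩
  have hIcc : ∑ j ∈ Finset.Icc 1 (n + 1), p j = ∑ j ∈ Finset.range (n + 1), p (j + 1) := by
    rw [Finset.range_eq_Ico, Finset.sum_Ico_add' p 0 (n + 1) 1]
    rfl
  rw [hZ, hIcc]
  calc _ ≤ (1 / (Nat.factorial (n + 1) : ℝ)) *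
        ∑ π : Equiv.Perm (Fin (n + 1)), p (cycleLen π 0) := by
        gcongr with π
        exact prod_le_cycleLen p hp0 hp1 π 0
    _ = _ := by
        rw [sum_cycleLen, Nat.factorial_succ]
        have : (Nat.factorial n : ℝ) ≠ 0 := by positivity
        push_cast
        field_simp
end
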